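/- Let n ≥ 2 and let G = (G₁, …, G_{n−1}) : ℂⁿ → ℂ^{n−1} be a polynomial mapping such that K₀(G) = ∅, i.e. at every z ∈ ℂⁿ the complex Jacobian matrix (∂G_j/∂z_i(z)) has rank n−1. Let a₁, …, a_n be nonnegative reals, not all zero, and set ρ(z) = a₁|z₁|² + ⋯ + a_n|z_n|². For i = 1, …, n let v_i(z) = (−1)^{1+i} · det of the (n−1) × (n−1) matrix obtained from the complex Jacobian matrix (∂G_j/∂z_k(z)) by deleting its i-th column, and define h : ℂⁿ → ℂ by h(z) = 2 Σ_{i=1}^{n} a_i v_i(z) · conj(z_i). Then the Milnor set M_G := { x ∈ ℂⁿ : the real Fréchet derivative at x of the map (G, ρ) : ℂⁿ → ℂ^{n−1} × ℝ has rank ≤ 2n−2 over ℝ } equals h⁻¹(0). -/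

import Mathlib

theorem aux_poly {n : ℕ} (p : MvPolynomial (Fin n) ℂ) (z : Fin n → ℂ) :
    HasFDerivAt (fun z : Fin n → ℂ => MvPolynomial.eval z p)
      (∑ i, MvPolynomial.eval z (MvPolynomial.pderiv i p) •
        (ContinuousLinearMap.proj i : (Fin n → ℂ) →L[ℂ] ℂ)) z := by
  induction p using MvPolynomial.induction_on with
  | C c =>
    have := hasFDerivAt_const (𝕜 := ℂ) c z
    simp only [MvPolynomial.eval_C]
    refine this.congr_fderiv ?_
    ext1 w
    simp
  | add p q hp hq =>
    have := hp.fun_add hq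
    simp only [map_add]
    refine this.congr_fderiv ?_
    ext1 w
    simp [add_mul, Finset.sum_add_distrib]
  | mul_X p i hp =>
    have := hp.fun_mul (ContinuousLinearMap.proj (R := ℂ) (φ := fun _ : Fin n => ℂ) i).hasFDerivAt
    simp only [map_mul, MvPolynomial.eval_X]
    refine this.congr_fderiv ?_
    ext1 w
    have e : ∀ k, MvPolynomial.eval z (MvPolynomial.pderiv k (p * MvPolynomial.X i)) * w k =
        z i * (MvPolynomial.eval z (MvPolynomial.pderiv k p) * w k) +
          if k = i then MvPolynomial.eval z p * w k else 0 := by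
      intro k
      rw [MvPolynomial.pderiv_mul]
      by_cases hk : k = i
      · subst hk
        simp; ring
      · simp [MvPolynomial.pderiv_X_of_ne (Ne.symm hk), hk]; ring
    simp [-Derivation.leibniz, e, Finset.sum_add_distrib, Finset.mul_sum, add_comm]

theorem aux_rho {n : ℕ} (a : Fin n → ℝ) (x : Fin n → ℂ) :
    ∃ r : (Fin n → ℂ) →L[ℝ] ℝ, HasFDerivAt (fun z : Fin n → ℂ => ∑ i, a i * ‖z i‖ ^ 2) r x ∧
      ∀ w, r w = (2 * ∑ i, (a i : ℂ) * w i * starRingEnd ℂ (x i)).re := by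
  refine ⟨∑ i, a i • ((2 • (innerSL ℝ (x i))).comp
    (ContinuousLinearMap.proj (R := ℝ) (φ := fun _ : Fin n => ℂ) i)), ?_, ?_⟩
  · apply HasFDerivAt.fun_sum
    intro i _
    have := ((ContinuousLinearMap.proj (R := ℝ) (φ := fun _ : Fin n => ℂ) i).hasFDerivAt
      (x := x)).norm_sq
    exact this.const_mul (a i)
  · intro w
    simp only [Complex.mul_re, Complex.re_sum, Complex.im_sum]
    simp [Finset.mul_sum, Complex.inner]
    apply Finset.sum_congr rfl
    intros; ring

theorem aux_det {m : ℕ} (J : Matrix (Fin m) (Fin (m+1)) ℂ) (V u : Fin (m+1) → ℂ)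
    (hV : ∀ i, V i = (-1 : ℂ) ^ (1 + (i : ℕ)) * (J.submatrix id i.succAbove).det) :
    ∑ i, u i * V i = - (Matrix.of (Fin.cons u J : Fin (m+1) → Fin (m+1) → ℂ)).det := by
  rw [Matrix.det_succ_row_zero, ← Finset.sum_neg_distrib]
  apply Finset.sum_congr rfl
  intro i _
  rw [hV, pow_add]
  have : (Matrix.of (Fin.cons u J : Fin (m+1) → Fin (m+1) → ℂ)).submatrix Fin.succ i.succAbove
    = J.submatrix id i.succAbove := by
    rfl
  have h2 : (Matrix.of (Fin.cons u J : Fin (m+1) → Fin (m+1) → ℂ)) 0 i = u i := rfl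
  rw [this, h2]
  ring

theorem aux_ker {m : ℕ} (J : Matrix (Fin m) (Fin (m+1)) ℂ) (hJ : J.rank = m)
    (V : Fin (m+1) → ℂ)
    (hV : ∀ i, V i = (-1 : ℂ) ^ (1 + (i : ℕ)) * (J.submatrix id i.succAbove).det) :
    Function.Surjective J.mulVec ∧ J.mulVec V = 0 ∧ ∀ w, J.mulVec w = 0 → ∃ c : ℂ, w = c • V := by
  have hs : LinearMap.range J.mulVecLin = ⊤ := by
    apply Submodule.eq_top_of_finrank_eq
    change J.rank = _
    simp [hJ]
  have hk : Module.finrank ℂ (LinearMap.ker J.mulVecLin) = 1 := by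
    have := LinearMap.finrank_range_add_finrank_ker J.mulVecLin
    rw [hs] at this
    simp at this
    omega
  have h0 : J.mulVec V = 0 := by
    ext j
    have := aux_det J V (J j) hV
    rw [Matrix.det_zero_of_row_eq (i := 0) (j := j.succ) (Fin.succ_ne_zero j).symm rfl] at this
    simpa [Matrix.mulVec, dotProduct] using this
  have hne : V ≠ 0 := by
    rintro rfl
    obtain ⟨⟨k, hkm⟩, hk0, hkk⟩ := finrank_eq_one_iff'.1 hk
    have hd := aux_det J 0 (star k) hV
    simp only [Pi.zero_apply, mul_zero, Finset.sum_const_zero] at hd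
    obtain ⟨w, hw0, hw⟩ := Matrix.exists_mulVec_eq_zero_iff.2 (neg_eq_zero.1 hd.symm)
    have hJw : J.mulVec w = 0 := by
      ext j
      exact congrFun hw j.succ
    have huw : star k ⬝ᵥ w = 0 := by
      exact congrFun hw 0
    obtain ⟨c, hc⟩ := hkk ⟨w, by simpa using hJw⟩
    have hc' : c • k = w := congrArg Subtype.val hc
    rw [← hc', dotProduct_smul, smul_eq_mul, mul_eq_zero] at huw
    rcases huw with h | h
    · apply hw0; rw [← hc', h, zero_smul]
    · open scoped ComplexOrder in
      rw [dotProduct_star_self_eq_zero] at h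
      apply hk0; ext; simp [h]
  refine ⟨LinearMap.range_eq_top.1 hs, h0, fun w hw => ?_⟩
  obtain ⟨c, hc⟩ := (finrank_eq_one_iff_of_nonzero' (⟨V, by simpa using h0⟩ : LinearMap.ker J.mulVecLin)
    (by simpa [Subtype.ext_iff] using hne)).1 hk ⟨w, by simpa using hw⟩
  exact ⟨c, (congrArg Subtype.val hc).symm⟩

theorem stmt3 (m : ℕ) (hm : 1 ≤ m)
    (G : Fin m → MvPolynomial (Fin (m + 1)) ℂ)
    (hreg : ∀ z : Fin (m + 1) → ℂ,
      Matrix.rank (Matrix.of fun (j : Fin m) (i : Fin (m + 1)) =>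
        MvPolynomial.eval z (MvPolynomial.pderiv i (G j))) = m)
    (a : Fin (m + 1) → ℝ) (ha : ∀ i, 0 ≤ a i) (ha0 : ∑ i, (a i) ^ 2 ≠ 0)
    (ρ : (Fin (m + 1) → ℂ) → ℝ) (hρ : ρ = fun z => ∑ i, a i * ‖z i‖ ^ 2)
    (v : (Fin (m + 1) → ℂ) → Fin (m + 1) → ℂ)
    (hv : ∀ (z : Fin (m + 1) → ℂ) (i : Fin (m + 1)),
      v z i = (-1 : ℂ) ^ (1 + (i : ℕ)) *
        ((Matrix.of fun (j : Fin m) (k : Fin (m + 1)) =>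
          MvPolynomial.eval z (MvPolynomial.pderiv k (G j))).submatrix id i.succAbove).det)
    (h : (Fin (m + 1) → ℂ) → ℂ)
    (hh : h = fun z => 2 * ∑ i, (a i : ℂ) * v z i * starRingEnd ℂ (z i)) :
    {x : Fin (m + 1) → ℂ |
      LinearMap.rank (fderiv ℝ
        (fun z => ((fun j => MvPolynomial.eval z (G j), ρ z) : (Fin m → ℂ) × ℝ)) x).toLinearMap
        ≤ ((2 * (m + 1) - 2 : ℕ) : Cardinal)} = h ⁻¹' {0} := by
  ext x
  obtain ⟨hs, hv0, hsp⟩ := aux_ker _ (hreg x) (v x) (hv x)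
  set J := (Matrix.of fun (j : Fin m) (i : Fin (m + 1)) =>
        MvPolynomial.eval x (MvPolynomial.pderiv i (G j))) with hJ
  obtain ⟨r, hr, hrw⟩ := aux_rho a x
  have hG : HasFDerivAt (fun z : Fin (m+1) → ℂ => (fun j => MvPolynomial.eval z (G j)))
      (ContinuousLinearMap.pi fun j => (∑ i, MvPolynomial.eval x (MvPolynomial.pderiv i (G j)) •
        (ContinuousLinearMap.proj i : (Fin (m+1) → ℂ) →L[ℂ] ℂ)).restrictScalars ℝ) x :=
    hasFDerivAt_pi.2 fun j => (aux_poly (G j) x).restrictScalars ℝ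
  have hT := hG.prodMk hr
  rw [Set.mem_ofPred_eq, hρ, hT.fderiv]
  set T := (ContinuousLinearMap.pi fun j => (∑ i, MvPolynomial.eval x (MvPolynomial.pderiv i (G j)) •
        (ContinuousLinearMap.proj i : (Fin (m+1) → ℂ) →L[ℂ] ℂ)).restrictScalars ℝ).prod r with hTdef
  have hTw : ∀ w, T w = (J.mulVec w, r w) := by
    intro w
    rw [hTdef]
    ext1
    · ext j
      simp [hJ, Matrix.mulVec, dotProduct]
    · rfl
  have hcod : Module.finrank ℝ ((Fin m → ℂ) × ℝ) = 2 * m + 1 := by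
    simp [Module.finrank_pi_fintype]; omega
  have hrc : ∀ c : ℂ, r (c • v x) = (c * h x).re := by
    intro c
    rw [hrw, hh]
    congr 1
    simp only [Finset.mul_sum, Pi.smul_apply, smul_eq_mul]
    apply Finset.sum_congr rfl
    intros; ring
  have key : Function.Surjective T ↔ h x ≠ 0 := by
    constructor
    · intro hsurj h0
      obtain ⟨w, hw⟩ := hsurj (0, 1)
      rw [hTw, Prod.mk.injEq] at hw
      obtain ⟨c, rfl⟩ := hsp w hw.1
      have := hw.2
      rw [hrc, h0] at this
      simp at this
    · rintro h0 ⟨y, t⟩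
      obtain ⟨w, hw⟩ := hs y
      refine ⟨w + (((t - r w : ℝ) : ℂ) / h x) • v x, ?_⟩
      rw [hTw, map_add, hrc, div_mul_cancel₀ _ h0, Matrix.mulVec_add, Matrix.mulVec_smul, hv0, hw]
      simp
  have hrank : LinearMap.rank T.toLinearMap ≤ ((2 * (m + 1) - 2 : ℕ) : Cardinal) ↔
      ¬ Function.Surjective T := by
    have e : LinearMap.rank T.toLinearMap =
      ((Module.finrank ℝ (LinearMap.range T.toLinearMap) : ℕ) : Cardinal) :=
      (Module.finrank_eq_rank _ _).symm
    rw [e, Nat.cast_le]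
    have hsu : Function.Surjective T ↔ LinearMap.range T.toLinearMap = ⊤ :=
      LinearMap.range_eq_top.symm
    rw [hsu]
    constructor
    · intro hle htop
      rw [htop, finrank_top, hcod] at hle
      omega
    · intro hne
      have := Submodule.finrank_lt hne
      rw [hcod] at this
      omega
  rw [hrank, key]
  simp
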